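/- Let M ∈ ℚ_+^{6×6} be the matrix with rows (1/8, 1/2, 17/22, 0, 0, 0), (0, 0, 0, 1/2, 3/4, 7/12), (3/4, 3/4, 3/11, 2, 1/2, 1/6), (1/4, 1/4, 8/11, 1/4, 19/8, 55/24), (1/2, 1/8, 1/11, 1/8, 15/16, 17/16), (11/16, 5/16, 7/44, 1/16, 7/32, 43/96). Then the restricted nonnegative rank of M over ℚ equals 6; in particular, there do not exist rational nonnegative matrices W ∈ ℚ_+^{6×5} and H ∈ ℚ_+^{5×6} with M = W·H and rank(W) = rank(M), even though rrk+(M) = 5 over ℝ. -/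

import Mathlib

open Matrix

/-- The restricted nonnegative rank over `ℝ`: the smallest inner dimension of a
nonnegative factorization `M = W * H` with `rank W = rank M`. -/
noncomputable def rrkPos {n m : ℕ} (M : Matrix (Fin n) (Fin m) ℝ) : ℕ :=
  sInf {d : ℕ | ∃ W : Matrix (Fin n) (Fin d) ℝ, ∃ H : Matrix (Fin d) (Fin m) ℝ,
    (∀ i k, 0 ≤ W i k) ∧ (∀ k j, 0 ≤ H k j) ∧ M = W * H ∧ W.rank = M.rank}

/-- The restricted nonnegative rank over `ℚ` of a rational matrix. -/
noncomputable def rrkPosQ {n m : ℕ} (M : Matrix (Fin n) (Fin m) ℚ) : ℕ :=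
  sInf {d : ℕ | ∃ W : Matrix (Fin n) (Fin d) ℚ, ∃ H : Matrix (Fin d) (Fin m) ℚ,
    (∀ i k, 0 ≤ W i k) ∧ (∀ k j, 0 ≤ H k j) ∧ M = W * H ∧ W.rank = M.rank}

/-- The `6 × 6` rational matrix of Theorem 5 of the paper. -/
def paperMatrix : Matrix (Fin 6) (Fin 6) ℚ :=
  !![1/8,   1/2,  17/22, 0,    0,     0;
     0,     0,    0,     1/2,  3/4,   7/12;
     3/4,   3/4,  3/11,  2,    1/2,   1/6;
     1/4,   1/4,  8/11,  1/4,  19/8,  55/24;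
     1/2,   1/8,  1/11,  1/8,  15/16, 17/16;
     11/16, 5/16, 7/44,  1/16, 7/32,  43/96]

section core
variable {K : Type*} [Field K] [LinearOrder K] [IsStrictOrderedRing K]

lemma conv_lt (b c u w m : K) (hb : 0 ≤ b) (hc : 0 ≤ c) (hbc : b + c ≤ 1) (hu : 0 ≤ u)
    (h1 : u < m) (h2 : w < m) : b * u + c * w < m := by
  have hM : max u w < m := max_lt h1 h2
  have e1 := mul_le_mul_of_nonneg_left (le_max_left u w) hb
  have e2 := mul_le_mul_of_nonneg_left (le_max_right u w) hc
  have e3 := mul_le_mul_of_nonneg_right hbc (hu.trans (le_max_left u w))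
  linarith

lemma faceA_ineq (t u1 us w1 ws : K) (ht : t < 3 / 5)
    (hu : us ≤ 2 - 2 * u1) (hws : ws ≤ 1) (hu2 : 17 / 22 ≤ u1)
    (q2 : 0 ≤ (u1 - 1 / 2) * (ws - 3 / 4) - (us - 3 / 4) * (w1 - 1 / 2))
    (q3 : 0 ≤ u1 * (3 / 11 - t) - (us - t) * (17 / 22))
    (w1le : w1 * (6 - 8 * t) ≤ 1 - t) : t ^ 2 - 4 * t + 2 ≤ 0 := by
  have hA : (3 - 4 * us) * (2 - 3 * t) ≤ (u1 - 1 / 2) * (6 - 8 * t) := by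
    have h1 : (3 / 4 - us) * (1 / 2 - w1) ≤ (u1 - 1 / 2) * (1 / 4) := by
      linarith [mul_nonneg (show 0 ≤ u1 - 1 / 2 by linarith) (sub_nonneg.2 hws)]
    have h2 : 0 ≤ 6 - 8 * t := by linarith
    have h3 : 0 ≤ 3 - 4 * us := by linarith
    linarith [mul_le_mul_of_nonneg_right h1 h2, mul_nonneg h3 (sub_nonneg.2 w1le)]
  have hU : u1 * (10 - 16 * t) ≤ 7 - 11 * t := by
    linarith [mul_nonneg (show 0 ≤ 2 - 3 * t by linarith) (sub_nonneg.2 hu)]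
  have hL : 51 * (3 - 4 * t) * (1 - t) ≤ u1 * (150 - 384 * t + 264 * t ^ 2) := by
    linarith [mul_nonneg (show 0 ≤ 2 - 3 * t by linarith) q3]
  have hR : 0 ≤ 150 - 384 * t + 264 * t ^ 2 := by nlinarith [sq_nonneg (t - 8 / 11)]
  have f1 := mul_le_mul_of_nonneg_right hU hR
  have f2 := mul_le_mul_of_nonneg_right hL (show 0 ≤ 10 - 16 * t by linarith)
  have f3 : (t ^ 2 - 4 * t + 2) * (240 - 360 * t) ≤ 0 := by linarith
  have f4 : 0 < 240 - 360 * t := by linarith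
  by_contra h
  push Not at h
  exact absurd (mul_pos h f4) (not_lt.2 f3)

/-- Triangle condition in the first face, oriented. -/
lemma faceA_or (t u1 us w1 ws a1 b1 c1 a2 b2 c2 a3 b3 c3 : K)
    (ht0 : 0 ≤ t) (ht1 : t ≤ 1) (hu1 : 0 ≤ u1)
    (hu : us ≤ 2 - 2 * u1) (hws : ws ≤ 1)
    (hb1 : 0 ≤ b1) (ha2 : 0 ≤ a2) (ha3 : 0 ≤ a3) (hb3 : 0 ≤ b3) (hc3 : 0 ≤ c3)
    (s1 : a1 + b1 + c1 = 1) (s2 : a2 + b2 + c2 = 1) (s3 : a3 + b3 + c3 = 1)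
    (x1 : b1 * u1 + c1 * w1 = 1 / 8) (y1 : a1 * t + b1 * us + c1 * ws = 3 / 4)
    (x2 : b2 * u1 + c2 * w1 = 1 / 2) (y2 : a2 * t + b2 * us + c2 * ws = 3 / 4)
    (x3 : b3 * u1 + c3 * w1 = 17 / 22) (y3 : a3 * t + b3 * us + c3 * ws = 3 / 11)
    (hD : 0 ≤ u1 * (ws - t) - (us - t) * w1) : t ^ 2 - 4 * t + 2 ≤ 0 := by
  by_contra hcon
  have ht : t < 3 / 5 := by
    clear * - hcon ht0 ht1
    nlinarith
  have q1 : 0 ≤ 1 / 8 * (ws - t) - (3 / 4 - t) * w1 := by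
    have : 1 / 8 * (ws - t) - (3 / 4 - t) * w1
        = b1 * (u1 * (ws - t) - (us - t) * w1) := by
      linear_combination (-(ws - t)) * x1 + w1 * y1 - w1 * t * s1
    rw [this]; positivity
  have q2 : 0 ≤ (u1 - 1 / 2) * (ws - 3 / 4) - (us - 3 / 4) * (w1 - 1 / 2) := by
    have : (u1 - 1 / 2) * (ws - 3 / 4) - (us - 3 / 4) * (w1 - 1 / 2)
        = a2 * (u1 * (ws - t) - (us - t) * w1) := by
      have ea : a2 = 1 - b2 - c2 := by linear_combination s2
      subst ea
      linear_combination (ws - us) * x2 + (u1 - w1) * y2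
    rw [this]; positivity
  have q3 : 0 ≤ u1 * (3 / 11 - t) - (us - t) * (17 / 22) := by
    have : u1 * (3 / 11 - t) - (us - t) * (17 / 22)
        = c3 * (u1 * (ws - t) - (us - t) * w1) := by
      linear_combination (us - t) * x3 - u1 * y3 + u1 * t * s3
    rw [this]; positivity
  have w1le : w1 * (6 - 8 * t) ≤ 1 - t := by linarith
  have hw : w1 < 17 / 22 := by
    by_contra h
    clear * - h ht w1le
    push Not at h
    nlinarith
  have hu2 : 17 / 22 ≤ u1 := by
    by_contra h
    push Not at h
    have := conv_lt b3 c3 u1 w1 _ hb3 hc3 (by linarith) hu1 h hw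
    linarith
  exact hcon (faceA_ineq t u1 us w1 ws ht hu hws hu2 q2 q3 w1le)

lemma faceB_ineq (t u1 us w1 ws : K) (ht0 : 29 / 50 < t) (ht1 : t ≤ 1)
    (hus : 0 ≤ us) (hws : 2 * ws ≤ 8 - 27 * w1) (hu2 : 6 / 23 ≤ u1)
    (q2 : 0 ≤ (u1 - 6 / 23) * (ws - 4 / 23) - (us - 4 / 23) * (w1 - 6 / 23))
    (q3 : 0 ≤ u1 * (4 / 59 - t) - (us - t) * (14 / 59))
    (w1le : w1 * (35 - 9 * t) ≤ 8 - 2 * t) : 0 ≤ t ^ 2 - 4 * t + 2 := by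
  have hu3 : u1 * (59 * t - 4) ≤ 14 * (t - us) := by linarith
  have hE : 0 < 59 * t - 4 := by linarith
  have hco : 0 ≤ 85 / 23 - us - 27 / 2 * u1 := by
    have h : 0 ≤ (85 / 23 - us - 27 / 2 * u1) * (59 * t - 4) := by
      linarith [mul_nonneg hus (show 0 ≤ 189 - (59 * t - 4) by linarith)]
    exact nonneg_of_mul_nonneg_left h hE
  have h1 : (4 / 23 - us) * (6 / 23 - w1) ≤ (u1 - 6 / 23) * (88 / 23 - 27 / 2 * w1) := by
    linarith [mul_nonneg (sub_nonneg.2 hu2) (sub_nonneg.2 hws)]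
  have hC : (4 / 23 - us) * (26 - 8 * t) ≤ (u1 - 6 / 23) * (596 - 171 * t) := by
    linarith [mul_le_mul_of_nonneg_right h1 (show 0 ≤ 35 - 9 * t by linarith),
      mul_nonneg hco (sub_nonneg.2 w1le)]
  have h2 := mul_le_mul_of_nonneg_right hC hE.le
  have h3 := mul_le_mul_of_nonneg_right hu3 (show 0 ≤ 596 - 171 * t by linarith)
  have h4 : 0 ≤ 14 * (596 - 171 * t) - (26 - 8 * t) * (59 * t - 4) := by
    clear * - ht0 ht1
    nlinarith
  linarith [mul_nonneg hus h4]

/-- Triangle condition in the second face, oriented. -/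
lemma faceB_or (t u1 us w1 ws a1 b1 c1 a2 b2 c2 a3 b3 c3 : K)
    (ht0 : 0 ≤ t) (ht1 : t ≤ 1) (hu1 : 0 ≤ u1)
    (hus : 0 ≤ us) (hws : 2 * ws ≤ 8 - 27 * w1)
    (hb1 : 0 ≤ b1) (ha2 : 0 ≤ a2) (hb2 : 0 ≤ b2) (hc2 : 0 ≤ c2) (hc3 : 0 ≤ c3)
    (s1 : a1 + b1 + c1 = 1) (s2 : a2 + b2 + c2 = 1) (s3 : a3 + b3 + c3 = 1)
    (x1 : b1 * u1 + c1 * w1 = 2 / 9) (y1 : a1 * t + b1 * us + c1 * ws = 8 / 9)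
    (x2 : b2 * u1 + c2 * w1 = 6 / 23) (y2 : a2 * t + b2 * us + c2 * ws = 4 / 23)
    (x3 : b3 * u1 + c3 * w1 = 14 / 59) (y3 : a3 * t + b3 * us + c3 * ws = 4 / 59)
    (hD : 0 ≤ u1 * (ws - t) - (us - t) * w1) : 0 ≤ t ^ 2 - 4 * t + 2 := by
  by_contra hcon
  have ht : 29 / 50 < t := by
    clear * - hcon ht0 ht1
    nlinarith
  have q1 : 0 ≤ 2 / 9 * (ws - t) - (8 / 9 - t) * w1 := by
    have : 2 / 9 * (ws - t) - (8 / 9 - t) * w1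
        = b1 * (u1 * (ws - t) - (us - t) * w1) := by
      linear_combination (-(ws - t)) * x1 + w1 * y1 - w1 * t * s1
    rw [this]; positivity
  have q2 : 0 ≤ (u1 - 6 / 23) * (ws - 4 / 23) - (us - 4 / 23) * (w1 - 6 / 23) := by
    have : (u1 - 6 / 23) * (ws - 4 / 23) - (us - 4 / 23) * (w1 - 6 / 23)
        = a2 * (u1 * (ws - t) - (us - t) * w1) := by
      have ea : a2 = 1 - b2 - c2 := by linear_combination s2
      subst ea
      linear_combination (ws - us) * x2 + (u1 - w1) * y2
    rw [this]; positivity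
  have q3 : 0 ≤ u1 * (4 / 59 - t) - (us - t) * (14 / 59) := by
    have : u1 * (4 / 59 - t) - (us - t) * (14 / 59)
        = c3 * (u1 * (ws - t) - (us - t) * w1) := by
      linear_combination (us - t) * x3 - u1 * y3 + u1 * t * s3
    rw [this]; positivity
  have w1le : w1 * (35 - 9 * t) ≤ 8 - 2 * t := by linarith
  have hw : w1 < 6 / 23 := by
    by_contra h
    clear * - h ht ht1 w1le
    push Not at h
    nlinarith
  have hu2 : 6 / 23 ≤ u1 := by
    by_contra h
    push Not at h
    have := conv_lt b2 c2 u1 w1 _ hb2 hc2 (by linarith) hu1 h hw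
    linarith
  exact hcon (faceB_ineq t u1 us w1 ws ht ht1 hus hws hu2 q2 q3 w1le)

/-- Homogeneous version for the first face. -/
lemma faceA (e u w : Fin 2 → K) (ux wx : K) (a b c : Fin 3 → K)
    (he : ∀ i, 0 ≤ e i) (hu : ∀ i, 0 ≤ u i) (hw : ∀ i, 0 ≤ w i)
    (hux : 0 < ux) (hwx : 0 < wx)
    (hu5 : ux ≤ u 0 / 2 + u 1) (hw5 : wx ≤ w 0 / 2 + w 1)
    (ha : ∀ i, 0 ≤ a i) (hb : ∀ i, 0 ≤ b i) (hc : ∀ i, 0 ≤ c i)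
    (x1 : b 0 * ux + c 0 * wx = 1 / 8) (x2 : b 1 * ux + c 1 * wx = 1 / 2)
    (x3 : b 2 * ux + c 2 * wx = 17 / 22)
    (y1 : a 0 * e 0 + b 0 * u 0 + c 0 * w 0 = 3 / 4)
    (y2 : a 1 * e 0 + b 1 * u 0 + c 1 * w 0 = 3 / 4)
    (y3 : a 2 * e 0 + b 2 * u 0 + c 2 * w 0 = 3 / 11)
    (z1 : a 0 * e 1 + b 0 * u 1 + c 0 * w 1 = 1 / 4)
    (z2 : a 1 * e 1 + b 1 * u 1 + c 1 * w 1 = 1 / 4)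
    (z3 : a 2 * e 1 + b 2 * u 1 + c 2 * w 1 = 8 / 11) :
    0 < e 0 + e 1 ∧ 2 * e 1 ^ 2 ≤ e 0 ^ 2 := by
  have hU : 0 < u 0 + u 1 := by linarith [hu 0]
  have hW : 0 < w 0 + w 1 := by linarith [hw 0]
  have key : ∀ (t n : K), 0 ≤ t → t ≤ 1 → 0 ≤ n → t * n = e 0 → (1 - t) * n = e 1 →
      t ^ 2 - 4 * t + 2 ≤ 0 := by
    intro t n ht0 ht1 hn h0 h1
    have aux : ∀ (u w : Fin 2 → K) (ux wx : K) (b c : Fin 3 → K),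
        (∀ i, 0 ≤ u i) → (∀ i, 0 ≤ w i) → 0 < ux → 0 < wx →
        ux ≤ u 0 / 2 + u 1 → wx ≤ w 0 / 2 + w 1 → 0 < u 0 + u 1 → 0 < w 0 + w 1 →
        (∀ i, 0 ≤ b i) → (∀ i, 0 ≤ c i) →
        b 0 * ux + c 0 * wx = 1 / 8 → b 1 * ux + c 1 * wx = 1 / 2 →
        b 2 * ux + c 2 * wx = 17 / 22 →
        a 0 * e 0 + b 0 * u 0 + c 0 * w 0 = 3 / 4 →
        a 1 * e 0 + b 1 * u 0 + c 1 * w 0 = 3 / 4 →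
        a 2 * e 0 + b 2 * u 0 + c 2 * w 0 = 3 / 11 →
        a 0 * e 1 + b 0 * u 1 + c 0 * w 1 = 1 / 4 →
        a 1 * e 1 + b 1 * u 1 + c 1 * w 1 = 1 / 4 →
        a 2 * e 1 + b 2 * u 1 + c 2 * w 1 = 8 / 11 →
        0 ≤ ux / (u 0 + u 1) * (w 0 / (w 0 + w 1) - t)
          - (u 0 / (u 0 + u 1) - t) * (wx / (w 0 + w 1)) → t ^ 2 - 4 * t + 2 ≤ 0 := by
      intro u w ux wx b c hu hw hux hwx hu5 hw5 hU hW hb hc x1 x2 x3 y1 y2 y3 z1 z2 z3 hD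
      have cu : ∀ y x : K, y * (u 0 + u 1) * (x / (u 0 + u 1)) = y * x := by
        intro y x; field_simp
      have cw : ∀ y x : K, y * (w 0 + w 1) * (x / (w 0 + w 1)) = y * x := by
        intro y x; field_simp
      refine faceA_or t (ux / (u 0 + u 1)) (u 0 / (u 0 + u 1)) (wx / (w 0 + w 1))
        (w 0 / (w 0 + w 1))
        (a 0 * n) (b 0 * (u 0 + u 1)) (c 0 * (w 0 + w 1))
        (a 1 * n) (b 1 * (u 0 + u 1)) (c 1 * (w 0 + w 1))
        (a 2 * n) (b 2 * (u 0 + u 1)) (c 2 * (w 0 + w 1)) ht0 ht1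
        (by positivity) ?_ ?_ (mul_nonneg (hb _) hU.le) (mul_nonneg (ha _) hn)
        (mul_nonneg (ha _) hn) (mul_nonneg (hb _) hU.le) (mul_nonneg (hc _) hW.le)
        ?_ ?_ ?_ ?_ ?_ ?_ ?_ ?_ ?_ hD
      · rw [div_le_iff₀ hU, sub_mul, mul_assoc, div_mul_cancel₀ _ hU.ne']; linarith
      · rw [div_le_one hW]; linarith [hw 1]
      · linear_combination y1 + z1 + a 0 * (h0 + h1)
      · linear_combination y2 + z2 + a 1 * (h0 + h1)
      · linear_combination y3 + z3 + a 2 * (h0 + h1)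
      · rw [cu, cw]; exact x1
      · rw [cu, cw]; linear_combination y1 + a 0 * h0
      · rw [cu, cw]; exact x2
      · rw [cu, cw]; linear_combination y2 + a 1 * h0
      · rw [cu, cw]; exact x3
      · rw [cu, cw]; linear_combination y3 + a 2 * h0
    rcases le_total 0 (ux / (u 0 + u 1) * (w 0 / (w 0 + w 1) - t)
          - (u 0 / (u 0 + u 1) - t) * (wx / (w 0 + w 1))) with hD | hD
    · exact aux u w ux wx b c hu hw hux hwx hu5 hw5 hU hW hb hc x1 x2 x3 y1 y2 y3 z1 z2 z3 hD
    · exact aux w u wx ux c b hw hu hwx hux hw5 hu5 hW hU hc hb (by linarith) (by linarith)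
        (by linarith) (by linarith) (by linarith) (by linarith) (by linarith) (by linarith)
        (by linarith) (by linarith)
  have hE : 0 < e 0 + e 1 := by
    rcases (add_nonneg (he 0) (he 1)).lt_or_eq with h | h
    · exact h
    · have h0 : e 0 = 0 := by linarith [he 0, he 1]
      have h1 : e 1 = 0 := by linarith [he 0, he 1]
      have := key 0 0 le_rfl zero_le_one le_rfl (by simp [h0]) (by simp [h1])
      norm_num at this
  refine ⟨hE, ?_⟩
  have k := key (e 0 / (e 0 + e 1)) (e 0 + e 1) (div_nonneg (he 0) hE.le)
    ((div_le_one hE).2 (by linarith [he 1])) hE.le (by field_simp) (by field_simp; ring)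
  have : (e 0 / (e 0 + e 1)) ^ 2 - 4 * (e 0 / (e 0 + e 1)) + 2
      = (2 * e 1 ^ 2 - e 0 ^ 2) / (e 0 + e 1) ^ 2 := by field_simp; ring
  rw [this, div_le_iff₀ (by positivity)] at k
  linarith

/-- Homogeneous version for the second face. -/
lemma faceB (e u w : Fin 2 → K) (ux wx : K) (a b c : Fin 3 → K)
    (he : ∀ i, 0 ≤ e i) (hu : ∀ i, 0 ≤ u i) (hw : ∀ i, 0 ≤ w i)
    (hux : 0 < ux) (hwx : 0 < wx)
    (hu5 : 27 / 8 * ux ≤ 3 / 4 * u 0 + u 1) (hw5 : 27 / 8 * wx ≤ 3 / 4 * w 0 + w 1)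
    (ha : ∀ i, 0 ≤ a i) (hb : ∀ i, 0 ≤ b i) (hc : ∀ i, 0 ≤ c i)
    (x1 : b 0 * ux + c 0 * wx = 1 / 2) (x2 : b 1 * ux + c 1 * wx = 3 / 4)
    (x3 : b 2 * ux + c 2 * wx = 7 / 12)
    (y1 : a 0 * e 0 + b 0 * u 0 + c 0 * w 0 = 2)
    (y2 : a 1 * e 0 + b 1 * u 0 + c 1 * w 0 = 1 / 2)
    (y3 : a 2 * e 0 + b 2 * u 0 + c 2 * w 0 = 1 / 6)
    (z1 : a 0 * e 1 + b 0 * u 1 + c 0 * w 1 = 1 / 4)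
    (z2 : a 1 * e 1 + b 1 * u 1 + c 1 * w 1 = 19 / 8)
    (z3 : a 2 * e 1 + b 2 * u 1 + c 2 * w 1 = 55 / 24) :
    0 < e 0 + e 1 ∧ e 0 ^ 2 ≤ 2 * e 1 ^ 2 := by
  have hU : 0 < u 0 + u 1 := by linarith [hu 0]
  have hW : 0 < w 0 + w 1 := by linarith [hw 0]
  have key : ∀ (t n : K), 0 ≤ t → t ≤ 1 → 0 ≤ n → t * n = e 0 → (1 - t) * n = e 1 →
      0 ≤ t ^ 2 - 4 * t + 2 := by
    intro t n ht0 ht1 hn h0 h1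
    have aux : ∀ (u w : Fin 2 → K) (ux wx : K) (b c : Fin 3 → K),
        (∀ i, 0 ≤ u i) → (∀ i, 0 ≤ w i) → 0 < ux → 0 < wx →
        27 / 8 * ux ≤ 3 / 4 * u 0 + u 1 → 27 / 8 * wx ≤ 3 / 4 * w 0 + w 1 →
        0 < u 0 + u 1 → 0 < w 0 + w 1 →
        (∀ i, 0 ≤ b i) → (∀ i, 0 ≤ c i) →
        b 0 * ux + c 0 * wx = 1 / 2 → b 1 * ux + c 1 * wx = 3 / 4 →
        b 2 * ux + c 2 * wx = 7 / 12 →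
        a 0 * e 0 + b 0 * u 0 + c 0 * w 0 = 2 →
        a 1 * e 0 + b 1 * u 0 + c 1 * w 0 = 1 / 2 →
        a 2 * e 0 + b 2 * u 0 + c 2 * w 0 = 1 / 6 →
        a 0 * e 1 + b 0 * u 1 + c 0 * w 1 = 1 / 4 →
        a 1 * e 1 + b 1 * u 1 + c 1 * w 1 = 19 / 8 →
        a 2 * e 1 + b 2 * u 1 + c 2 * w 1 = 55 / 24 →
        0 ≤ ux / (u 0 + u 1) * (w 0 / (w 0 + w 1) - t)
          - (u 0 / (u 0 + u 1) - t) * (wx / (w 0 + w 1)) → 0 ≤ t ^ 2 - 4 * t + 2 := by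
      intro u w ux wx b c hu hw hux hwx hu5 hw5 hU hW hb hc x1 x2 x3 y1 y2 y3 z1 z2 z3 hD
      have cu : ∀ m y x : K, m * y * (u 0 + u 1) * (x / (u 0 + u 1)) = m * y * x := by
        intro m y x; field_simp
      have cw : ∀ m y x : K, m * y * (w 0 + w 1) * (x / (w 0 + w 1)) = m * y * x := by
        intro m y x; field_simp
      have p1 : (0 : K) ≤ 4 / 9 := by norm_num
      have p2 : (0 : K) ≤ 8 / 23 := by norm_num
      have p3 : (0 : K) ≤ 24 / 59 := by norm_num
      refine faceB_or t (ux / (u 0 + u 1)) (u 0 / (u 0 + u 1)) (wx / (w 0 + w 1))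
        (w 0 / (w 0 + w 1))
        (4 / 9 * a 0 * n) (4 / 9 * b 0 * (u 0 + u 1)) (4 / 9 * c 0 * (w 0 + w 1))
        (8 / 23 * a 1 * n) (8 / 23 * b 1 * (u 0 + u 1)) (8 / 23 * c 1 * (w 0 + w 1))
        (24 / 59 * a 2 * n) (24 / 59 * b 2 * (u 0 + u 1)) (24 / 59 * c 2 * (w 0 + w 1)) ht0 ht1
        (by positivity) (div_nonneg (hu 0) hU.le) ?_
        (mul_nonneg (mul_nonneg p1 (hb _)) hU.le) (mul_nonneg (mul_nonneg p2 (ha _)) hn)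
        (mul_nonneg (mul_nonneg p2 (hb _)) hU.le) (mul_nonneg (mul_nonneg p2 (hc _)) hW.le)
        (mul_nonneg (mul_nonneg p3 (hc _)) hW.le)
        ?_ ?_ ?_ ?_ ?_ ?_ ?_ ?_ ?_ hD
      · rw [← sub_nonneg]
        have : 8 - 27 * (wx / (w 0 + w 1)) - 2 * (w 0 / (w 0 + w 1))
          = (8 * (w 0 + w 1) - 27 * wx - 2 * w 0) / (w 0 + w 1) := by field_simp
        rw [this]
        exact div_nonneg (by linarith) hW.le
      · linear_combination 4 / 9 * (y1 + z1 + a 0 * (h0 + h1))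
      · linear_combination 8 / 23 * (y2 + z2 + a 1 * (h0 + h1))
      · linear_combination 24 / 59 * (y3 + z3 + a 2 * (h0 + h1))
      · rw [cu, cw]; linear_combination 4 / 9 * x1
      · rw [cu, cw]; linear_combination 4 / 9 * (y1 + a 0 * h0)
      · rw [cu, cw]; linear_combination 8 / 23 * x2
      · rw [cu, cw]; linear_combination 8 / 23 * (y2 + a 1 * h0)
      · rw [cu, cw]; linear_combination 24 / 59 * x3
      · rw [cu, cw]; linear_combination 24 / 59 * (y3 + a 2 * h0)
    rcases le_total 0 (ux / (u 0 + u 1) * (w 0 / (w 0 + w 1) - t)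
          - (u 0 / (u 0 + u 1) - t) * (wx / (w 0 + w 1))) with hD | hD
    · exact aux u w ux wx b c hu hw hux hwx hu5 hw5 hU hW hb hc x1 x2 x3 y1 y2 y3 z1 z2 z3 hD
    · exact aux w u wx ux c b hw hu hwx hux hw5 hu5 hW hU hc hb (by linarith) (by linarith)
        (by linarith) (by linarith) (by linarith) (by linarith) (by linarith) (by linarith)
        (by linarith) (by linarith)
  have hE : 0 < e 0 + e 1 := by
    rcases (add_nonneg (he 0) (he 1)).lt_or_eq with h | h
    · exact h
    · have h0 : e 0 = 0 := by linarith [he 0, he 1]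
      have h1 : e 1 = 0 := by linarith [he 0, he 1]
      have := key 1 0 zero_le_one le_rfl le_rfl (by simp [h0]) (by simp [h1])
      norm_num at this
  refine ⟨hE, ?_⟩
  have k := key (e 0 / (e 0 + e 1)) (e 0 + e 1) (div_nonneg (he 0) hE.le)
    ((div_le_one hE).2 (by linarith [he 1])) hE.le (by field_simp) (by field_simp; ring)
  have : (e 0 / (e 0 + e 1)) ^ 2 - 4 * (e 0 / (e 0 + e 1)) + 2
      = (2 * e 1 ^ 2 - e 0 ^ 2) / (e 0 + e 1) ^ 2 := by field_simp; ring
  rw [this, le_div_iff₀ (by positivity)] at k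
  linarith
end core
section comb
variable {K : Type*} [Field K] [LinearOrder K] [IsStrictOrderedRing K]

lemma sum_three {d : ℕ} (f : Fin d → K) (e u w : Fin d) (h1 : e ≠ u) (h2 : e ≠ w) (h3 : u ≠ w)
    (h : ∀ k, k ≠ e → k ≠ u → k ≠ w → f k = 0) : ∑ k, f k = f e + f u + f w := by
  have : ∑ k ∈ ({e, u, w} : Finset (Fin d)), f k = ∑ k, f k := by
    apply Finset.sum_subset (Finset.subset_univ _)
    intro k _ hk
    simp only [Finset.mem_insert, Finset.mem_singleton, not_or] at hk
    exact h k hk.1 hk.2.1 hk.2.2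
  rw [← this, Finset.sum_insert (by simp [h1, h2]), Finset.sum_pair h3, add_assoc]

lemma sum_two {d : ℕ} (f : Fin d → K) (u w : Fin d) (h3 : u ≠ w)
    (h : ∀ k, k ≠ u → k ≠ w → f k = 0) : ∑ k, f k = f u + f w := by
  have : ∑ k ∈ ({u, w} : Finset (Fin d)), f k = ∑ k, f k := by
    apply Finset.sum_subset (Finset.subset_univ _)
    intro k _ hk
    simp only [Finset.mem_insert, Finset.mem_singleton, not_or] at hk
    exact h k hk.1 hk.2
  rw [← this, Finset.sum_pair h3]

set_option maxHeartbeats 2000000 in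
/-- structure of a factorization through five columns -/
lemma core (W : Matrix (Fin 6) (Fin 5) K) (H : Matrix (Fin 5) (Fin 6) K)
    (hW : ∀ i k, 0 ≤ W i k) (hH : ∀ k j, 0 ≤ H k j)
    (hM : ∀ i j, ((paperMatrix i j : ℚ) : K) = ∑ k, W i k * H k j)
    (r4 : ∀ k, W 4 k = - W 0 k - 9 / 4 * W 1 k + 1 / 2 * W 2 k + W 3 k)
    (r5 : ∀ k, W 5 k = - W 0 k - 27 / 8 * W 1 k + 3 / 4 * W 2 k + W 3 k) :
    (∃ k, 0 < W 2 k + W 3 k ∧ W 2 k ^ 2 = 2 * W 3 k ^ 2) ∧ ∀ k, ∃ i, W i k ≠ 0 := by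
  have m00 : ∑ k, W 0 k * H k 0 = 1 / 8 := by
    rw [← hM, show paperMatrix 0 0 = 1 / 8 from rfl]; norm_num
  have m01 : ∑ k, W 0 k * H k 1 = 1 / 2 := by
    rw [← hM, show paperMatrix 0 1 = 1 / 2 from rfl]; norm_num
  have m02 : ∑ k, W 0 k * H k 2 = 17 / 22 := by
    rw [← hM, show paperMatrix 0 2 = 17 / 22 from rfl]; norm_num
  have m03 : ∑ k, W 0 k * H k 3 = 0 := by
    rw [← hM, show paperMatrix 0 3 = 0 from rfl]; norm_num
  have m04 : ∑ k, W 0 k * H k 4 = 0 := by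
    rw [← hM, show paperMatrix 0 4 = 0 from rfl]; norm_num
  have m05 : ∑ k, W 0 k * H k 5 = 0 := by
    rw [← hM, show paperMatrix 0 5 = 0 from rfl]; norm_num
  have m10 : ∑ k, W 1 k * H k 0 = 0 := by
    rw [← hM, show paperMatrix 1 0 = 0 from rfl]; norm_num
  have m11 : ∑ k, W 1 k * H k 1 = 0 := by
    rw [← hM, show paperMatrix 1 1 = 0 from rfl]; norm_num
  have m12 : ∑ k, W 1 k * H k 2 = 0 := by
    rw [← hM, show paperMatrix 1 2 = 0 from rfl]; norm_num
  have m13 : ∑ k, W 1 k * H k 3 = 1 / 2 := by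
    rw [← hM, show paperMatrix 1 3 = 1 / 2 from rfl]; norm_num
  have m14 : ∑ k, W 1 k * H k 4 = 3 / 4 := by
    rw [← hM, show paperMatrix 1 4 = 3 / 4 from rfl]; norm_num
  have m15 : ∑ k, W 1 k * H k 5 = 7 / 12 := by
    rw [← hM, show paperMatrix 1 5 = 7 / 12 from rfl]; norm_num
  have m20 : ∑ k, W 2 k * H k 0 = 3 / 4 := by
    rw [← hM, show paperMatrix 2 0 = 3 / 4 from rfl]; norm_num
  have m21 : ∑ k, W 2 k * H k 1 = 3 / 4 := by
    rw [← hM, show paperMatrix 2 1 = 3 / 4 from rfl]; norm_num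
  have m22 : ∑ k, W 2 k * H k 2 = 3 / 11 := by
    rw [← hM, show paperMatrix 2 2 = 3 / 11 from rfl]; norm_num
  have m23 : ∑ k, W 2 k * H k 3 = 2 := by
    rw [← hM, show paperMatrix 2 3 = 2 from rfl]; norm_num
  have m24 : ∑ k, W 2 k * H k 4 = 1 / 2 := by
    rw [← hM, show paperMatrix 2 4 = 1 / 2 from rfl]; norm_num
  have m25 : ∑ k, W 2 k * H k 5 = 1 / 6 := by
    rw [← hM, show paperMatrix 2 5 = 1 / 6 from rfl]; norm_num
  have m30 : ∑ k, W 3 k * H k 0 = 1 / 4 := by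
    rw [← hM, show paperMatrix 3 0 = 1 / 4 from rfl]; norm_num
  have m31 : ∑ k, W 3 k * H k 1 = 1 / 4 := by
    rw [← hM, show paperMatrix 3 1 = 1 / 4 from rfl]; norm_num
  have m32 : ∑ k, W 3 k * H k 2 = 8 / 11 := by
    rw [← hM, show paperMatrix 3 2 = 8 / 11 from rfl]; norm_num
  have m33 : ∑ k, W 3 k * H k 3 = 1 / 4 := by
    rw [← hM, show paperMatrix 3 3 = 1 / 4 from rfl]; norm_num
  have m34 : ∑ k, W 3 k * H k 4 = 19 / 8 := by
    rw [← hM, show paperMatrix 3 4 = 19 / 8 from rfl]; norm_num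
  have m35 : ∑ k, W 3 k * H k 5 = 55 / 24 := by
    rw [← hM, show paperMatrix 3 5 = 55 / 24 from rfl]; norm_num
  have hz : ∀ i j, ∑ k, W i k * H k j = 0 → ∀ k, 0 < W i k → H k j = 0 := by
    intro i j h k hk
    have := (Finset.sum_eq_zero_iff_of_nonneg
      (fun k _ => mul_nonneg (hW i k) (hH k j))).1 h k (Finset.mem_univ k)
    exact (mul_eq_zero.1 this).resolve_left hk.ne'
  have hle : ∀ i j k, W i k * H k j ≤ ∑ k, W i k * H k j := fun i j k =>
    Finset.single_le_sum (f := fun k => W i k * H k j)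
      (fun k _ => mul_nonneg (hW i k) (hH k j)) (Finset.mem_univ k)
  -- the three classes of columns
  let A : Finset (Fin 5) := Finset.univ.filter fun k => 0 < W 0 k ∧ W 1 k = 0
  let B : Finset (Fin 5) := Finset.univ.filter fun k => W 0 k = 0 ∧ 0 < W 1 k
  let E : Finset (Fin 5) := Finset.univ.filter fun k => W 0 k = 0 ∧ W 1 k = 0
  have memA : ∀ k, k ∈ A ↔ 0 < W 0 k ∧ W 1 k = 0 := fun k => by simp [A]
  have memB : ∀ k, k ∈ B ↔ W 0 k = 0 ∧ 0 < W 1 k := fun k => by simp [B]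
  have memE : ∀ k, k ∈ E ↔ W 0 k = 0 ∧ W 1 k = 0 := fun k => by simp [E]
  have dAB : Disjoint A B := by
    rw [Finset.disjoint_left]; intro k h1 h2; rw [memA] at h1; rw [memB] at h2
    exact h1.1.ne' h2.1
  have dABE : Disjoint (A ∪ B) E := by
    rw [Finset.disjoint_left]; intro k h1 h2; rw [Finset.mem_union, memA, memB] at h1
    rw [memE] at h2
    rcases h1 with h1 | h1
    · exact h1.1.ne' h2.1
    · exact h1.2.ne' h2.2
  have hcard : A.card + B.card + E.card ≤ 5 := by
    rw [← Finset.card_union_of_disjoint dAB, ← Finset.card_union_of_disjoint dABE]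
    exact (Finset.card_le_univ _).trans (by simp)
  -- vanishing of terms
  have vA : ∀ j, ∑ k, W 1 k * H k j = 0 → ∀ k, k ∉ A → k ∉ E → H k j = 0 := by
    intro j h k h1 h2
    rw [memA] at h1; rw [memE] at h2
    apply hz 1 j h k
    rcases (hW 1 k).lt_or_eq with h | h
    · exact h
    · exfalso
      rcases (hW 0 k).lt_or_eq with h' | h'
      · exact h1 ⟨h', h.symm⟩
      · exact h2 ⟨h'.symm, h.symm⟩
  have vB : ∀ j, ∑ k, W 0 k * H k j = 0 → ∀ k, k ∉ B → k ∉ E → H k j = 0 := by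
    intro j h k h1 h2
    rw [memB] at h1; rw [memE] at h2
    apply hz 0 j h k
    rcases (hW 0 k).lt_or_eq with h | h
    · exact h
    · exfalso
      rcases (hW 1 k).lt_or_eq with h' | h'
      · exact h1 ⟨h.symm, h'⟩
      · exact h2 ⟨h.symm, h'.symm⟩
  have vA0 : ∀ j, ∑ k, W 1 k * H k j = 0 → ∀ k, k ∉ A → W 0 k * H k j = 0 := by
    intro j h k h1
    by_cases h2 : k ∈ E
    · rw [((memE k).1 h2).1, zero_mul]
    · rw [vA j h k h1 h2, mul_zero]
  have vB0 : ∀ j, ∑ k, W 0 k * H k j = 0 → ∀ k, k ∉ B → W 1 k * H k j = 0 := by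
    intro j h k h1
    by_cases h2 : k ∈ E
    · rw [((memE k).1 h2).2, zero_mul]
    · rw [vB j h k h1 h2, mul_zero]
  have hA2 : 2 ≤ A.card := by
    by_contra hlt
    have : A.card = 0 ∨ A.card = 1 := by omega
    rcases this with h | h
    · rw [Finset.card_eq_zero] at h
      rw [Finset.sum_eq_zero (fun k _ => vA0 0 m10 k (by simp [h]))] at m00
      norm_num at m00
    · obtain ⟨u, hu⟩ := Finset.card_eq_one.1 h
      have e1 : W 0 u * H u 1 = 1 / 2 := by
        rw [← m01]; symm
        exact Finset.sum_eq_single u (fun k _ hk => vA0 1 m11 k (by simp [hu, hk])) (by simp)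
      have e2 : W 0 u * H u 2 = 17 / 22 := by
        rw [← m02]; symm
        exact Finset.sum_eq_single u (fun k _ hk => vA0 2 m12 k (by simp [hu, hk])) (by simp)
      have hu0 := (memA u).1 (by simp [hu])
      have f1 := hle 3 1 u
      have f2 := hle 2 2 u
      rw [m31] at f1
      rw [m22] at f2
      have g1 : W 3 u ≤ 1 / 2 * W 0 u := by
        have := mul_le_mul_of_nonneg_left f1 hu0.1.le
        have h' : W 0 u * (W 3 u * H u 1) = W 3 u * (1 / 2) := by rw [← e1]; ring
        linarith
      have g2 : W 2 u ≤ 6 / 17 * W 0 u := by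
        have := mul_le_mul_of_nonneg_left f2 hu0.1.le
        have h' : W 0 u * (W 2 u * H u 2) = W 2 u * (17 / 22) := by rw [← e2]; ring
        linarith
      have := hW 4 u
      rw [r4, hu0.2] at this
      linarith [hu0.1]
  have hB2 : 2 ≤ B.card := by
    by_contra hlt
    have : B.card = 0 ∨ B.card = 1 := by omega
    rcases this with h | h
    · rw [Finset.card_eq_zero] at h
      rw [Finset.sum_eq_zero (fun k _ => vB0 3 m03 k (by simp [h]))] at m13
      norm_num at m13
    · obtain ⟨u, hu⟩ := Finset.card_eq_one.1 h
      have e1 : W 1 u * H u 3 = 1 / 2 := by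
        rw [← m13]; symm
        exact Finset.sum_eq_single u (fun k _ hk => vB0 3 m03 k (by simp [hu, hk])) (by simp)
      have e2 : W 1 u * H u 5 = 7 / 12 := by
        rw [← m15]; symm
        exact Finset.sum_eq_single u (fun k _ hk => vB0 5 m05 k (by simp [hu, hk])) (by simp)
      have hu0 := (memB u).1 (by simp [hu])
      have f1 := hle 3 3 u
      have f2 := hle 2 5 u
      rw [m33] at f1
      rw [m25] at f2
      have g1 : W 3 u ≤ 1 / 2 * W 1 u := by
        have := mul_le_mul_of_nonneg_left f1 hu0.2.le
        have h' : W 1 u * (W 3 u * H u 3) = W 3 u * (1 / 2) := by rw [← e1]; ring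
        linarith
      have g2 : W 2 u ≤ 2 / 7 * W 1 u := by
        have := mul_le_mul_of_nonneg_left f2 hu0.2.le
        have h' : W 1 u * (W 2 u * H u 5) = W 2 u * (7 / 12) := by rw [← e2]; ring
        linarith
      have := hW 4 u
      rw [r4, hu0.1] at this
      linarith [hu0.2]
  -- consequences of `faceA` and `faceB`
  have useA : ∀ (u w : Fin 5) (e : Fin 2 → K) (a : Fin 3 → K), A = {u, w} → u ≠ w →
      (∀ i, 0 ≤ e i) → (∀ i, 0 ≤ a i) →
      (∀ i ∈ ({2, 3} : Finset (Fin 6)), ∀ j, ∑ k, W 1 k * H k j = 0 → ∀ j' : Fin 3, (j' : ℕ) = j →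
        ∑ k, W i k * H k j = a j' * e (if i = 2 then 0 else 1) + W i u * H u j + W i w * H w j) →
      0 < e 0 + e 1 ∧ 2 * e 1 ^ 2 ≤ e 0 ^ 2 := by
    intro u w e a hA huw he ha hs
    have hu0 := (memA u).1 (by simp [hA])
    have hw0 := (memA w).1 (by simp [hA])
    have h0 : ∀ j, ∑ k, W 1 k * H k j = 0 → ∑ k, W 0 k * H k j = W 0 u * H u j + W 0 w * H w j := by
      intro j hj
      exact sum_two _ u w huw (fun k h1 h2 => vA0 j hj k (by simp [hA, h1, h2]))
    have hu4 := hW 4 u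
    have hw4 := hW 4 w
    rw [r4, hu0.2] at hu4
    rw [r4, hw0.2] at hw4
    have s20 := hs 2 (by simp) 0 m10 0 rfl
    have s21 := hs 2 (by simp) 1 m11 1 rfl
    have s22 := hs 2 (by simp) 2 m12 2 rfl
    have s30 := hs 3 (by simp) 0 m10 0 rfl
    have s31 := hs 3 (by simp) 1 m11 1 rfl
    have s32 := hs 3 (by simp) 2 m12 2 rfl
    simp only [if_true, show ((3 : Fin 6) = 2) = False by decide, if_false] at s20 s21 s22 s30 s31 s32
    apply faceA e ![W 2 u, W 3 u] ![W 2 w, W 3 w] (W 0 u) (W 0 w) a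
      ![H u 0, H u 1, H u 2] ![H w 0, H w 1, H w 2] he
    · intro i; fin_cases i <;> simp [hW]
    · intro i; fin_cases i <;> simp [hW]
    · exact hu0.1
    · exact hw0.1
    · simp; linarith
    · simp; linarith
    · exact ha
    · intro i; fin_cases i <;> simp [hH]
    · intro i; fin_cases i <;> simp [hH]
    all_goals simp only [Matrix.cons_val]
    · linarith [h0 0 m10]
    · linarith [h0 1 m11]
    · linarith [h0 2 m12]
    all_goals linarith
  have useB : ∀ (u w : Fin 5) (e : Fin 2 → K) (a : Fin 3 → K), B = {u, w} → u ≠ w →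
      (∀ i, 0 ≤ e i) → (∀ i, 0 ≤ a i) →
      (∀ i ∈ ({2, 3} : Finset (Fin 6)), ∀ j, ∑ k, W 0 k * H k j = 0 →
        ∀ j' : Fin 3, (j' : ℕ) + 3 = j →
        ∑ k, W i k * H k j = a j' * e (if i = 2 then 0 else 1) + W i u * H u j + W i w * H w j) →
      0 < e 0 + e 1 ∧ e 0 ^ 2 ≤ 2 * e 1 ^ 2 := by
    intro u w e a hB huw he ha hs
    have hu0 := (memB u).1 (by simp [hB])
    have hw0 := (memB w).1 (by simp [hB])
    have h0 : ∀ j, ∑ k, W 0 k * H k j = 0 → ∑ k, W 1 k * H k j = W 1 u * H u j + W 1 w * H w j := by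
      intro j hj
      exact sum_two _ u w huw (fun k h1 h2 => vB0 j hj k (by simp [hB, h1, h2]))
    have hu4 := hW 5 u
    have hw4 := hW 5 w
    rw [r5, hu0.1] at hu4
    rw [r5, hw0.1] at hw4
    have s20 := hs 2 (by simp) 3 m03 0 rfl
    have s21 := hs 2 (by simp) 4 m04 1 rfl
    have s22 := hs 2 (by simp) 5 m05 2 rfl
    have s30 := hs 3 (by simp) 3 m03 0 rfl
    have s31 := hs 3 (by simp) 4 m04 1 rfl
    have s32 := hs 3 (by simp) 5 m05 2 rfl
    simp only [if_true, show ((3 : Fin 6) = 2) = False by decide, if_false] at s20 s21 s22 s30 s31 s32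
    apply faceB e ![W 2 u, W 3 u] ![W 2 w, W 3 w] (W 1 u) (W 1 w) a
      ![H u 3, H u 4, H u 5] ![H w 3, H w 4, H w 5] he
    · intro i; fin_cases i <;> simp [hW]
    · intro i; fin_cases i <;> simp [hW]
    · exact hu0.2
    · exact hw0.2
    · simp; linarith
    · simp; linarith
    · exact ha
    · intro i; fin_cases i <;> simp [hH]
    · intro i; fin_cases i <;> simp [hH]
    all_goals simp only [Matrix.cons_val]
    · linarith [h0 3 m03]
    · linarith [h0 4 m04]
    · linarith [h0 5 m05]
    all_goals linarith
  have hE0 : E.card ≠ 0 := by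
    intro h
    have hE : E = ∅ := Finset.card_eq_zero.1 h
    have : A.card = 2 ∨ B.card = 2 := by omega
    rcases this with h | h
    · obtain ⟨u, w, huw, hA⟩ := Finset.card_eq_two.1 h
      have := useA u w (fun _ => 0) (fun _ => 0) hA huw (fun _ => le_rfl) (fun _ => le_rfl) (by
        intro i _ j hj _ _
        rw [sum_two _ u w huw]
        · simp
        · intro k h1 h2
          rw [vA j hj k (by simp [hA, h1, h2]) (by simp [hE]), mul_zero])
      simp at this
    · obtain ⟨u, w, huw, hB⟩ := Finset.card_eq_two.1 h
      have := useB u w (fun _ => 0) (fun _ => 0) hB huw (fun _ => le_rfl) (fun _ => le_rfl) (by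
        intro i _ j hj _ _
        rw [sum_two _ u w huw]
        · simp
        · intro k h1 h2
          rw [vB j hj k (by simp [hB, h1, h2]) (by simp [hE]), mul_zero])
      simp at this
  have hE1 : E.card = 1 := by omega
  have hA1 : A.card = 2 := by omega
  have hB1 : B.card = 2 := by omega
  obtain ⟨e, hE⟩ := Finset.card_eq_one.1 hE1
  obtain ⟨u, w, huw, hA⟩ := Finset.card_eq_two.1 hA1
  obtain ⟨u', w', huw', hB⟩ := Finset.card_eq_two.1 hB1
  have heA : e ∉ A := fun h => (Finset.disjoint_left.1 dABE) (Finset.mem_union_left _ h) (by simp [hE])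
  have heB : e ∉ B := fun h => (Finset.disjoint_left.1 dABE) (Finset.mem_union_right _ h) (by simp [hE])
  have k1 := useA u w ![W 2 e, W 3 e] ![H e 0, H e 1, H e 2] hA huw
    (by intro i; fin_cases i <;> simp [hW]) (by intro i; fin_cases i <;> simp [hH]) (by
      intro i hi j hj j' hj'
      simp only [hA, Finset.mem_insert, Finset.mem_singleton, not_or] at heA
      rw [sum_three _ e u w heA.1 heA.2 huw]
      · have hjj : j = Fin.castLE (by norm_num) j' := by ext; simp [hj']
        subst hjj
        simp only [Finset.mem_insert, Finset.mem_singleton] at hi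
        rcases hi with rfl | rfl <;> fin_cases j' <;> simp [mul_comm]
      · intro k h0 h1 h2
        rw [vA j hj k (by simp [hA, h1, h2]) (by simp [hE, h0]), mul_zero])
  have k2 := useB u' w' ![W 2 e, W 3 e] ![H e 3, H e 4, H e 5] hB huw'
    (by intro i; fin_cases i <;> simp [hW]) (by intro i; fin_cases i <;> simp [hH]) (by
      intro i hi j hj j' hj'
      simp only [hB, Finset.mem_insert, Finset.mem_singleton, not_or] at heB
      rw [sum_three _ e u' w' heB.1 heB.2 huw']
      · have hjj : j = Fin.natAdd 3 j' := by ext; simp; omega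
        subst hjj
        simp only [Finset.mem_insert, Finset.mem_singleton] at hi
        rcases hi with rfl | rfl <;> fin_cases j' <;> simp [mul_comm]
      · intro k h0 h1 h2
        rw [vB j hj k (by simp [hB, h1, h2]) (by simp [hE, h0]), mul_zero])
  simp only [Matrix.cons_val] at k1 k2
  refine ⟨⟨e, k1.1, le_antisymm k2.2 k1.2⟩, ?_⟩
  intro k
  have huniv : (A ∪ B) ∪ E = Finset.univ := by
    apply Finset.eq_univ_of_card
    rw [Finset.card_union_of_disjoint dABE, Finset.card_union_of_disjoint dAB, hA1, hB1, hE1]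
    simp
  have hk : k ∈ (A ∪ B) ∪ E := by rw [huniv]; exact Finset.mem_univ k
  rw [Finset.mem_union, Finset.mem_union] at hk
  rcases hk with (hk | hk) | hk
  · exact ⟨0, ((memA k).1 hk).1.ne'⟩
  · exact ⟨1, ((memB k).1 hk).2.ne'⟩
  · rw [hE, Finset.mem_singleton] at hk
    subst hk
    by_contra hcon
    push Not at hcon
    rw [hcon, hcon] at k1
    simp at k1

/-- Linear relations from equality of ranks. -/
lemma rel_of_rank {n m d : ℕ} (M : Matrix (Fin n) (Fin m) K) (W : Matrix (Fin n) (Fin d) K)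
    (H : Matrix (Fin d) (Fin m) K) (h : M = W * H) (hr : W.rank = M.rank) (v : Fin n → K)
    (hv : v ᵥ* M = 0) : v ᵥ* W = 0 := by
  have hle : LinearMap.range M.mulVecLin ≤ LinearMap.range W.mulVecLin := by
    rw [h, Matrix.mulVecLin_mul]
    exact LinearMap.range_comp_le_range _ _
  have heq : LinearMap.range M.mulVecLin = LinearMap.range W.mulVecLin :=
    Submodule.eq_of_le_of_finrank_eq hle (by simpa [Matrix.rank] using hr.symm)
  ext k
  have hk : W.mulVecLin (Pi.single k 1) ∈ LinearMap.range M.mulVecLin := by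
    rw [heq]; exact LinearMap.mem_range_self _ _
  obtain ⟨x, hx⟩ := hk
  have e1 : v ⬝ᵥ (W *ᵥ Pi.single k 1) = 0 := by
    rw [← Matrix.mulVecLin_apply, ← hx, Matrix.mulVecLin_apply, Matrix.dotProduct_mulVec, hv,
      zero_dotProduct]
  rw [Matrix.dotProduct_mulVec, dotProduct_single, mul_one] at e1
  simpa using e1

lemma matM : paperMatrix.map ((↑) : ℚ → K) =
  !![1/8,   1/2,  17/22, 0,    0,     0;
     0,     0,    0,     1/2,  3/4,   7/12;
     3/4,   3/4,  3/11,  2,    1/2,   1/6;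
     1/4,   1/4,  8/11,  1/4,  19/8,  55/24;
     1/2,   1/8,  1/11,  1/8,  15/16, 17/16;
     11/16, 5/16, 7/44,  1/16, 7/32,  43/96] := by
  ext i j
  fin_cases i <;> fin_cases j <;> norm_num [paperMatrix]

/-- The same, for factorizations of inner dimension at most five. -/
lemma core_le {d : ℕ} (hd : d ≤ 5) (W : Matrix (Fin 6) (Fin d) K) (H : Matrix (Fin d) (Fin 6) K)
    (hW : ∀ i k, 0 ≤ W i k) (hH : ∀ k j, 0 ≤ H k j)
    (hM : paperMatrix.map ((↑) : ℚ → K) = W * H)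
    (hr : W.rank = (paperMatrix.map ((↑) : ℚ → K)).rank) :
    d = 5 ∧ ∃ s r : K, 0 < s + r ∧ s ^ 2 = 2 * r ^ 2 := by
  have r4 : ∀ k, W 4 k = - W 0 k - 9 / 4 * W 1 k + 1 / 2 * W 2 k + W 3 k := by
    intro k
    have := congrFun (rel_of_rank _ W H hM hr ![-1, -9/4, 1/2, 1, -1, 0] (by
      rw [matM]
      ext j
      simp only [Matrix.vecMul, dotProduct, Fin.sum_univ_six]
      fin_cases j <;> simp <;> norm_num)) k
    simp only [Matrix.vecMul, dotProduct, Fin.sum_univ_six, Matrix.cons_val, Pi.zero_apply] at this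
    linear_combination -this
  have r5 : ∀ k, W 5 k = - W 0 k - 27 / 8 * W 1 k + 3 / 4 * W 2 k + W 3 k := by
    intro k
    have := congrFun (rel_of_rank _ W H hM hr ![-1, -27/8, 3/4, 1, 0, -1] (by
      rw [matM]
      ext j
      simp only [Matrix.vecMul, dotProduct, Fin.sum_univ_six]
      fin_cases j <;> simp <;> norm_num)) k
    simp only [Matrix.vecMul, dotProduct, Fin.sum_univ_six, Matrix.cons_val, Pi.zero_apply] at this
    linear_combination -this
  have hc := core (Matrix.of fun i k => if h : (k : ℕ) < d then W i ⟨k, h⟩ else 0)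
    (Matrix.of fun k j => if h : (k : ℕ) < d then H ⟨k, h⟩ j else 0)
    (by intro i k; simp only [Matrix.of_apply]; split_ifs; exacts [hW _ _, le_rfl])
    (by intro i k; simp only [Matrix.of_apply]; split_ifs; exacts [hH _ _, le_rfl])
    (by
      intro i j
      have := congrFun (congrFun hM i) j
      rw [Matrix.map_apply, Matrix.mul_apply] at this
      rw [this]
      simp only [Matrix.of_apply]
      clear * - hd
      interval_cases d <;> simp [Fin.sum_univ_succ])
    (by intro k; simp only [Matrix.of_apply]; split_ifs; exacts [r4 _, by simp])
    (by intro k; simp only [Matrix.of_apply]; split_ifs; exacts [r5 _, by simp])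
  obtain ⟨⟨k, h1, h2⟩, h3⟩ := hc
  refine ⟨?_, _, _, h1, h2⟩
  by_contra hne
  obtain ⟨i, hi⟩ := h3 ⟨d, by omega⟩
  simp at hi
end comb
/-- explicit matrix -/
noncomputable def matW (s : ℝ) : Matrix (Fin 6) (Fin 5) ℝ :=
  !![0, 11/14 + 1/14*s, 3/14 + 1/14*s, 0, 0;
     0, 0, 0, 110/431 + 4/431*s, 32/127 - 2/127*s;
     2 - 1*s, 3/7 - 1/7*s, 1, 0, 76/127 + 27/127*s;
     -1 + 1*s, 4/7 + 1/7*s, 0, 1, 51/127 - 27/127*s;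
     1/2*s, 0, 2/7 - 1/14*s, 367/862 - 9/431*s, 17/127 - 9/127*s;
     1/2 + 1/4*s, 3/28 - 1/28*s, 15/28 - 1/14*s, 239/1724 - 27/862*s, 0]

/-- explicit matrix -/
noncomputable def matH (s : ℝ) : Matrix (Fin 5) (Fin 6) ℝ :=
  !![1/4 + 1/4*s, 0, 1/11*s, 1/4 - 1/8*s, 0, 1/6 + 1/12*s;
     0, 1/2 - 1/8*s, 1 - 1/11*s, 0, 0, 0;
     3/4 - 1/4*s, 1/2 + 1/8*s, 0, 0, 0, 0;
     0, 0, 0, 0, 239/136 + 27/68*s, 55/24 - 1/12*s;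
     0, 0, 0, 2 + 1/8*s, 19/17 - 27/68*s, 0]

/-- explicit matrix -/
noncomputable def matG (s : ℝ) : Matrix (Fin 6) (Fin 5) ℝ :=
  !![-4/7 + 32/21*s, -40/147 + 4/147*s, 8/21 - 4/21*s, 512/431 - 424/9051*s, 260/889 - 652/2667*s;
     88/21 - 76/21*s, 88/147 - 16/49*s, 8/7 + 4/21*s, -4192/1293 - 64/9051*s, -2864/2667 + 2084/2667*s;
     -55/21 + 44/21*s, 33/49 + 44/147*s, -11/21, 2464/1293 + 110/9051*s, 1727/2667 - 1243/2667*s;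
     0, 0, 0, 220/431 + 8/431*s, 64/127 - 4/127*s;
     0, 0, 0, 0, 0;
     0, 0, 0, 0, 0]


set_option maxHeartbeats 4000000 in
lemma matWH (s : ℝ) (hs : s ^ 2 = 2) : paperMatrix.map ((↑) : ℚ → ℝ) = matW s * matH s := by
  rw [matM]
  ext i j
  rw [Matrix.mul_apply, Fin.sum_univ_five]
  fin_cases i <;> fin_cases j <;> simp [matW, matH] <;> ring_nf <;> (try rw [hs]) <;> norm_num

set_option maxHeartbeats 4000000 in
lemma matMG (s : ℝ) : matW s = paperMatrix.map ((↑) : ℚ → ℝ) * matG s := by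
  rw [matM]
  ext i j
  rw [Matrix.mul_apply, Fin.sum_univ_six]
  fin_cases i <;> fin_cases j <;> simp [matW, matG] <;> ring_nf

lemma matW_nonneg (s : ℝ) (h1 : 1.414 < s) (h2 : s < 1.415) (i k) : 0 ≤ matW s i k := by
  fin_cases i <;> fin_cases k <;> simp [matW] <;> linarith

lemma matH_nonneg (s : ℝ) (h1 : 1.414 < s) (h2 : s < 1.415) (i k) : 0 ≤ matH s i k := by
  fin_cases i <;> fin_cases k <;> simp [matH] <;> linarith

/-- The restricted nonnegative rank of the matrix `M` above over `ℚ` equals `6`;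
in particular there is no rational restricted NMF of `M` with inner dimension `5`,
even though `rrk+(M) = 5` over `ℝ`. -/
theorem stmt16 :
    rrkPosQ paperMatrix = 6 ∧
    (¬ ∃ W : Matrix (Fin 6) (Fin 5) ℚ, ∃ H : Matrix (Fin 5) (Fin 6) ℚ,
      (∀ i k, 0 ≤ W i k) ∧ (∀ k j, 0 ≤ H k j) ∧ paperMatrix = W * H ∧
        W.rank = paperMatrix.rank) ∧
    rrkPos (paperMatrix.map ((↑) : ℚ → ℝ)) = 5 := by
  have hQ : ∀ d ≤ 5, ¬ ∃ W : Matrix (Fin 6) (Fin d) ℚ, ∃ H : Matrix (Fin d) (Fin 6) ℚ,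
      (∀ i k, 0 ≤ W i k) ∧ (∀ k j, 0 ≤ H k j) ∧ paperMatrix = W * H ∧
        W.rank = paperMatrix.rank := by
    rintro d hd ⟨W, H, hW, hH, hM, hr⟩
    have hid : paperMatrix.map (Rat.cast : ℚ → ℚ) = paperMatrix := by ext i j; simp
    obtain ⟨-, s, r, h1, h2⟩ := core_le hd W H hW hH (by rw [hid]; exact hM) (by rw [hid]; exact hr)
    have hr0 : r ≠ 0 := by
      rintro rfl
      simp at h2
      simp [h2] at h1
    have h3 : (s / r) ^ 2 = 2 := by
      rw [div_pow, h2]; field_simp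
    have h4 : ((s / r : ℚ) : ℝ) ^ 2 = 2 := by exact_mod_cast h3
    have h5 : Real.sqrt 2 = |((s / r : ℚ) : ℝ)| := by rw [← h4, Real.sqrt_sq_eq_abs]
    apply irrational_sqrt_two
    exact ⟨|s / r|, by rw [h5]; push_cast; rfl⟩
  refine ⟨?_, hQ 5 le_rfl, ?_⟩
  · apply le_antisymm
    · apply Nat.sInf_le
      refine ⟨paperMatrix, 1, ?_, ?_, by simp, rfl⟩
      · intro i k
        fin_cases i <;> fin_cases k <;> norm_num [paperMatrix]
      · intro k j
        rw [Matrix.one_apply]; split_ifs <;> norm_num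
    · apply le_csInf
      · refine ⟨6, paperMatrix, 1, ?_, ?_, by simp, rfl⟩
        · intro i k
          fin_cases i <;> fin_cases k <;> norm_num [paperMatrix]
        · intro k j
          rw [Matrix.one_apply]; split_ifs <;> norm_num
      · intro d hd
        by_contra hlt
        exact hQ d (by omega) hd
  · have hs : Real.sqrt 2 ^ 2 = 2 := Real.sq_sqrt (by norm_num)
    have h1 : (1.414 : ℝ) < Real.sqrt 2 := Real.lt_sqrt_of_sq_lt (by norm_num)
    have h2 : Real.sqrt 2 < 1.415 := (Real.sqrt_lt' (by norm_num)).2 (by norm_num)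
    have h5 : ∃ W : Matrix (Fin 6) (Fin 5) ℝ, ∃ H : Matrix (Fin 5) (Fin 6) ℝ,
        (∀ i k, 0 ≤ W i k) ∧ (∀ k j, 0 ≤ H k j) ∧ paperMatrix.map ((↑) : ℚ → ℝ) = W * H ∧
        W.rank = (paperMatrix.map ((↑) : ℚ → ℝ)).rank := by
      refine ⟨matW (Real.sqrt 2), matH (Real.sqrt 2), matW_nonneg _ h1 h2, matH_nonneg _ h1 h2,
        matWH _ hs, le_antisymm ?_ ?_⟩
      · rw [matMG]; exact Matrix.rank_mul_le_left _ _
      · rw [matWH _ hs]; exact Matrix.rank_mul_le_left _ _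
    apply le_antisymm
    · exact Nat.sInf_le h5
    · refine le_csInf ⟨5, h5⟩ ?_
      rintro d ⟨W, H, hW, hH, hM, hr⟩
      by_contra hlt
      have := (core_le (by omega) W H hW hH hM hr).1
      omega
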